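/- (Triangular structure of products.) Let k ∈ ℕ, let β₁, …, β_{k+1} be populated multi-indices, and set β := e_k + β₁ + ⋯ + β_{k+1} (with e_k the unit multi-index in the variable z_k). Then β_i ≺ β for every i = 1, …, k+1, and |β₁| + ⋯ + |β_{k+1}| = |β|. -/

import Mathlib

open Finsupp

noncomputable section

/-- The index set `I`: symbols `z_k` for `k : ℕ` (left summand) and `z_n` for
`n ∈ ℕ² \ {(0,0)}` (right summand). -/
abbrev RSIdx : Type := ℕ ⊕ {n : ℕ × ℕ // n ≠ (0, 0)}

/-- Multi-indices: finitely supported functions from the index set to `ℕ`. -/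
abbrev MIdx : Type := RSIdx →₀ ℕ

/-- The unit multi-index `e_k`. -/
def eK (k : ℕ) : MIdx := Finsupp.single (Sum.inl k) 1

/-- The unit multi-index `e_n` for `n ≠ (0,0)`. -/
def eN (n : {n : ℕ × ℕ // n ≠ (0, 0)}) : MIdx := Finsupp.single (Sum.inr n) 1

/-- The scaled length `[β] = Σ_k k·β(k) − Σ_{n≠(0,0)} β(n)`. -/
def slen (β : MIdx) : ℤ :=
  β.sum fun i m =>
    match i with
    | Sum.inl k => (k : ℤ) * (m : ℤ)
    | Sum.inr _ => -(m : ℤ)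

/-- The parabolic length `|n| = n₁ + 2 n₂` of `n ∈ ℕ²`. -/
def plen (n : ℕ × ℕ) : ℕ := n.1 + 2 * n.2

/-- The polynomial part `|β|_p = Σ_{n≠(0,0)} |n|·β(n)`. -/
def polyPart (β : MIdx) : ℕ :=
  β.sum fun i m =>
    match i with
    | Sum.inl _ => 0
    | Sum.inr n => plen n.val * m

/-- The homogeneity `|β| = α(1+[β]) + |β|_p`. -/
def homog (α : ℝ) (β : MIdx) : ℝ := α * (1 + (slen β : ℝ)) + (polyPart β : ℝ)

/-- `β` is purely polynomial iff `β = e_n` for some `n ≠ (0,0)`. -/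
def PurelyPoly (β : MIdx) : Prop := ∃ n, β = eN n

/-- `β` is populated iff it is purely polynomial or `[β] ≥ 0`. -/
def Populated (β : MIdx) : Prop := PurelyPoly β ∨ 0 ≤ slen β

/-- The ordinal `|β|_≺ = [β] + (1/2)|β|_p + (1/4)β(0)`. -/
def precNorm (β : MIdx) : ℝ :=
  (slen β : ℝ) + (polyPart β : ℝ) / 2 + (β (Sum.inl 0) : ℝ) / 4

lemma slen_add (a b : MIdx) : slen (a + b) = slen a + slen b := by
  unfold slen
  apply Finsupp.sum_add_index'
  · rintro (k | n) <;> simp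
  · rintro (k | n) x y
    · push_cast
      ring
    · push_cast
      ring

lemma polyPart_add (a b : MIdx) : polyPart (a + b) = polyPart a + polyPart b := by
  unfold polyPart
  apply Finsupp.sum_add_index'
  · rintro (k | n) <;> simp
  · rintro (k | n) x y
    · rfl
    · exact mul_add _ _ _

lemma slen_sum {ι : Type*} (s : Finset ι) (f : ι → MIdx) :
    slen (∑ j ∈ s, f j) = ∑ j ∈ s, slen (f j) := by
  classical
  induction s using Finset.induction_on with
  | empty => simp [slen]
  | insert a s ha ih => rw [Finset.sum_insert ha, Finset.sum_insert ha, slen_add, ih]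

lemma polyPart_sum {ι : Type*} (s : Finset ι) (f : ι → MIdx) :
    polyPart (∑ j ∈ s, f j) = ∑ j ∈ s, polyPart (f j) := by
  classical
  induction s using Finset.induction_on with
  | empty => simp [polyPart]
  | insert a s ha ih => rw [Finset.sum_insert ha, Finset.sum_insert ha, polyPart_add, ih]

lemma slen_eK (k : ℕ) : slen (eK k) = k := by
  simp [slen, eK]

lemma polyPart_eK (k : ℕ) : polyPart (eK k) = 0 := by
  simp [polyPart, eK]

lemma precNorm_add (a b : MIdx) : precNorm (a + b) = precNorm a + precNorm b := by
  simp only [precNorm, slen_add, polyPart_add, Finsupp.add_apply]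
  push_cast
  ring

lemma precNorm_sum {ι : Type*} (s : Finset ι) (f : ι → MIdx) :
    precNorm (∑ j ∈ s, f j) = ∑ j ∈ s, precNorm (f j) := by
  classical
  induction s using Finset.induction_on with
  | empty => simp [precNorm, slen, polyPart]
  | insert a s ha ih => rw [Finset.sum_insert ha, Finset.sum_insert ha, precNorm_add, ih]

lemma precNorm_ge (b : MIdx) (h : Populated b) : -(1 / 2 : ℝ) ≤ precNorm b := by
  rcases h with ⟨n, rfl⟩ | h
  · have h1 : slen (eN n) = -1 := by simp [slen, eN]
    have h2 : polyPart (eN n) = plen n.val := by simp [polyPart, eN]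
    have h3 : 1 ≤ plen n.val := by
      obtain ⟨⟨a, b⟩, hn⟩ := n
      simp only [plen]
      by_contra hc
      apply hn
      have : a = 0 := by omega
      have : b = 0 := by omega
      simp [*]
    have h4 : (1 : ℝ) ≤ (plen n.val : ℝ) := by exact_mod_cast h3
    have h5 : (0 : ℝ) ≤ ((eN n) (Sum.inl 0) : ℝ) := Nat.cast_nonneg _
    rw [precNorm, h1, h2]
    push_cast
    linarith
  · have h1 : (0 : ℝ) ≤ (slen b : ℝ) := by exact_mod_cast h
    unfold precNorm
    have : (0 : ℝ) ≤ (polyPart b : ℝ) / 2 + (b (Sum.inl 0) : ℝ) / 4 := by positivity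
    linarith

/-- Triangular structure of products: with populated `β₁, …, β_{k+1}` and
`β = e_k + β₁ + ⋯ + β_{k+1}`, one has `βᵢ ≺ β` for every `i`, and
`|β₁| + ⋯ + |β_{k+1}| = |β|`. -/
theorem statement15 (k : ℕ) (βs : Fin (k + 1) → MIdx)
    (hpop : ∀ i, Populated (βs i)) :
    (∀ i, precNorm (βs i) < precNorm (eK k + ∑ j, βs j))
    ∧ ∀ α : ℝ, (∑ i, homog α (βs i)) = homog α (eK k + ∑ j, βs j) := by
  constructor
  · intro i
    rw [precNorm_add, precNorm_sum, ← Finset.add_sum_erase _ _ (Finset.mem_univ i)]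
    have h1 : -((k : ℝ) / 2) ≤ ∑ j ∈ Finset.univ.erase i, precNorm (βs j) := by
      have := Finset.card_nsmul_le_sum (Finset.univ.erase i) (fun j => precNorm (βs j))
        (-(1 / 2 : ℝ)) (fun j _ => precNorm_ge _ (hpop j))
      rw [Finset.card_erase_of_mem (Finset.mem_univ i)] at this
      simp only [Finset.card_univ, Fintype.card_fin, Nat.add_sub_cancel, nsmul_eq_mul] at this
      linarith
    have h2 : (k : ℝ) / 2 < precNorm (eK k) := by
      rw [precNorm, slen_eK, polyPart_eK]
      rcases Nat.eq_zero_or_pos k with rfl | hk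
      · simp [eK]
      · have : (0 : ℝ) < k := by exact_mod_cast hk
        have h5 : (0 : ℝ) ≤ ((eK k) (Sum.inl 0) : ℝ) := Nat.cast_nonneg _
        push_cast
        linarith
    linarith
  · intro α
    simp only [homog, slen_add, polyPart_add, slen_sum, polyPart_sum, slen_eK, polyPart_eK]
    push_cast
    rw [Finset.sum_add_distrib, ← Finset.mul_sum, Finset.sum_add_distrib]
    simp only [Finset.sum_const, Finset.card_univ, Fintype.card_fin, nsmul_eq_mul]
    push_cast
    ring
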